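/- arXiv:2502.12240 — 5 statements merged into one kernel-verified Lean document; each statement's English description precedes it below -/
import Mathlib

section
/- Tracing out either tensor factor of the spacetime density matrix recovers the conventional reduced density matrices: the partial trace of T_AB over H_B equals ρ_A := Tr_{A'} ρ, and the partial trace of T_AB over H_A equals ρ_B := Tr_{B'} (U ρ U†). -/
open Matrix
open scoped Kronecker ComplexOrder

/-- Partial trace over the second (right) tensor factor. -/
noncomputable def ptraceR {A B : Type*} [Fintype B] (M : Matrix (A × B) (A × B) ℂ) : Matrix A A ℂ :=
  Matrix.of fun a a' => ∑ b, M (a, b) (a', b)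

/-- Partial trace over the first (left) tensor factor. -/
noncomputable def ptraceL {A B : Type*} [Fintype A] (M : Matrix (A × B) (A × B) ℂ) : Matrix B B ℂ :=
  Matrix.of fun b b' => ∑ a, M (a, b) (a, b')

theorem trace_mul_kron_one {A B : Type*} [Fintype A] [Fintype B] [DecidableEq B]
    (M : Matrix (A × B) (A × B) ℂ) (X : Matrix A A ℂ) :
    (M * (X ⊗ₖ (1 : Matrix B B ℂ))).trace = (ptraceR M * X).trace := by
  simp only [Matrix.trace, Matrix.diag, Matrix.mul_apply, ptraceR, Matrix.of_apply,
    Fintype.sum_prod_type, Matrix.kroneckerMap_apply, Matrix.one_apply, mul_ite, mul_one,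
    mul_zero, Finset.sum_ite_eq', Finset.mem_univ, if_true, Finset.sum_mul]
  refine Finset.sum_congr rfl fun a _ => ?_
  rw [Finset.sum_comm]

theorem trace_mul_one_kron {A B : Type*} [Fintype A] [Fintype B] [DecidableEq A]
    (M : Matrix (A × B) (A × B) ℂ) (X : Matrix B B ℂ) :
    (M * ((1 : Matrix A A ℂ) ⊗ₖ X)).trace = (ptraceL M * X).trace := by
  simp only [Matrix.trace, Matrix.diag, Matrix.mul_apply, ptraceL, Matrix.of_apply,
    Fintype.sum_prod_type_right, Matrix.kroneckerMap_apply, Matrix.one_apply, ite_mul, one_mul,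
    zero_mul, mul_ite, mul_zero, Finset.sum_ite_eq', Finset.mem_univ, if_true, Finset.sum_mul]
  refine Finset.sum_congr rfl fun a _ => ?_
  rw [Finset.sum_comm]

/-- Tracing out either factor of the spacetime density matrix `T_AB` recovers the
conventional reduced density matrices: `Tr_B T_AB = ρ_A := Tr_{A'} ρ` and
`Tr_A T_AB = ρ_B := Tr_{B'} (U ρ U†)`. -/
theorem ptrace_spacetime_density_matrix
    {A A' B B' : Type*} [Fintype A] [Fintype A'] [Fintype B] [Fintype B']
    [DecidableEq A] [DecidableEq A'] [DecidableEq B] [DecidableEq B']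
    (ρ : Matrix (A × A') (A × A') ℂ) (hρ : ρ.PosSemidef) (hρtr : ρ.trace = 1)
    (U : Matrix (B × B') (A × A') ℂ) (hU : Uᴴ * U = 1) (hU' : U * Uᴴ = 1)
    (T : Matrix (A × B) (A × B) ℂ)
    (hT : ∀ (OA : Matrix A A ℂ) (OB : Matrix B B ℂ),
      (T * (OA ⊗ₖ OB)).trace
        = (ρ * (OA ⊗ₖ (1 : Matrix A' A' ℂ)) * Uᴴ
            * (OB ⊗ₖ (1 : Matrix B' B' ℂ)) * U).trace) :
    ptraceR T = ptraceR ρ ∧ ptraceL T = ptraceR (U * ρ * Uᴴ) := by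
  constructor
  · rw [Matrix.ext_iff_trace_mul_right]
    intro X
    rw [← trace_mul_kron_one, ← trace_mul_kron_one, hT X 1, Matrix.one_kronecker_one,
      Matrix.mul_one, Matrix.mul_assoc _ Uᴴ U, hU, Matrix.mul_one]
  · rw [Matrix.ext_iff_trace_mul_right]
    intro X
    rw [← trace_mul_one_kron, ← trace_mul_kron_one, hT 1 X, Matrix.one_kronecker_one,
      Matrix.mul_one, Matrix.trace_mul_comm]
    simp only [Matrix.mul_assoc]
end

section
/- The Hermitian adjoint of the spacetime density matrix encodes the opposite operator ordering: for all linear operators O_A on H_A and O_B on H_B, Tr(T_AB† (O_A ⊗ O_B)) = Tr(ρ U† (O_B ⊗ 1) U (O_A ⊗ 1)), i.e. it produces the Wightman correlator ⟨O_B(t) O_A(0)⟩. -/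
open Matrix
open scoped Kronecker ComplexOrder ENNReal

/-- The Hermitian adjoint of the spacetime density matrix encodes the opposite
operator ordering: `Tr (T_AB† (O_A ⊗ O_B)) = Tr (ρ U† (O_B ⊗ 1) U (O_A ⊗ 1))`,
i.e. it produces the Wightman correlator `⟨O_B(t) O_A(0)⟩`. -/
theorem conjTranspose_spacetime_density_matrix_gives_opposite_ordering
    {A A' B B' : Type*} [Fintype A] [Fintype A'] [Fintype B] [Fintype B']
    [DecidableEq A] [DecidableEq A'] [DecidableEq B] [DecidableEq B']
    (ρ : Matrix (A × A') (A × A') ℂ) (hρ : ρ.PosSemidef) (hρtr : ρ.trace = 1)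
    (U : Matrix (B × B') (A × A') ℂ) (hU : Uᴴ * U = 1) (hU' : U * Uᴴ = 1)
    (T : Matrix (A × B) (A × B) ℂ)
    (hT : ∀ (OA : Matrix A A ℂ) (OB : Matrix B B ℂ),
      (T * (OA ⊗ₖ OB)).trace
        = (ρ * (OA ⊗ₖ (1 : Matrix A' A' ℂ)) * Uᴴ
            * (OB ⊗ₖ (1 : Matrix B' B' ℂ)) * U).trace) :
    ∀ (OA : Matrix A A ℂ) (OB : Matrix B B ℂ),
      (Tᴴ * (OA ⊗ₖ OB)).trace
        = (ρ * Uᴴ * (OB ⊗ₖ (1 : Matrix B' B' ℂ)) * U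
            * (OA ⊗ₖ (1 : Matrix A' A' ℂ))).trace := by
  intro OA OB
  have h := congrArg star (hT OAᴴ OBᴴ)
  rw [← trace_conjTranspose, ← trace_conjTranspose] at h
  simp only [conjTranspose_mul, conjTranspose_kronecker, conjTranspose_conjTranspose,
    conjTranspose_one, hρ.isHermitian.eq] at h
  rw [trace_mul_comm, h]
  simp only [← Matrix.mul_assoc]
  rw [trace_mul_comm]
  simp only [← Matrix.mul_assoc]
end

section
/- Suppose ρ = |ψ⟩⟨ψ| is a pure state. Then for every integer n ≥ 1, Tr(T_AB^n) = Tr((Θ_{A'}(T_{ĀB}))^n), where Θ_{A'} denotes the partial transpose on the H_A' factor. Consequently T_AB and Θ_{A'}(T_{ĀB}) have the same spectrum with multiplicities. -/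
open Matrix
open scoped Kronecker ComplexOrder ENNReal

open scoped Classical

/-- The partial transpose on the first tensor factor. -/
noncomputable def ptranspL {A B : Type*} (M : Matrix (A × B) (A × B) ℂ) :
    Matrix (A × B) (A × B) ℂ :=
  Matrix.of fun x y => M (y.1, x.2) (x.1, y.2)

theorem trace_mul_pow_comm_aux {m n : Type*} [Fintype m] [Fintype n] [DecidableEq m]
    [DecidableEq n] (X : Matrix m n ℂ) (Y : Matrix n m ℂ) (k : ℕ) (hk : 1 ≤ k) :
    ((X * Y) ^ k).trace = ((Y * X) ^ k).trace := by
  have h : ∀ j : ℕ, (X * Y) ^ (j + 1) = X * ((Y * X) ^ j * Y) := by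
    intro j
    induction j with
    | zero => simp
    | succ j ih => rw [pow_succ, ih, pow_succ]; simp only [Matrix.mul_assoc]
  obtain ⟨j, rfl⟩ : ∃ j, k = j + 1 := ⟨k - 1, by omega⟩
  rw [h, Matrix.trace_mul_comm, Matrix.mul_assoc, pow_succ]

theorem roots_filter_comm_aux {m n : Type*} [Fintype m] [Fintype n] [DecidableEq m]
    [DecidableEq n] (X : Matrix m n ℂ) (Y : Matrix n m ℂ) :
    (X * Y).charpoly.roots.filter (fun z => z ≠ 0)
      = (Y * X).charpoly.roots.filter (fun z => z ≠ 0) := by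
  have h := congrArg (fun p => p.roots.filter (fun z => z ≠ 0)) (Matrix.charpoly_mul_comm' X Y)
  have h0 : ∀ (k : ℕ) (p : Polynomial ℂ), p.Monic →
      ((Polynomial.X ^ k * p).roots.filter (fun z => z ≠ 0))
        = p.roots.filter (fun z => z ≠ 0) := by
    intro k p hp
    rw [Polynomial.roots_mul ((Polynomial.monic_X_pow k).mul hp).ne_zero, Multiset.filter_add,
      Polynomial.roots_X_pow]
    have : Multiset.filter (fun z : ℂ => z ≠ 0) (k • ({0} : Multiset ℂ)) = 0 := by
      rw [Multiset.filter_eq_nil]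
      intro a ha
      have := Multiset.mem_of_mem_nsmul ha
      simpa using this
    rw [this, zero_add]
  simp only [h0 _ _ (Matrix.charpoly_monic _)] at h
  exact h

theorem trace_mul_single_kron_aux {A B : Type*} [Fintype A] [Fintype B] [DecidableEq A]
    [DecidableEq B] (T : Matrix (A × B) (A × B) ℂ) (a a2 : A) (b b2 : B) :
    (T * (Matrix.single a2 a (1 : ℂ) ⊗ₖ Matrix.single b2 b (1 : ℂ))).trace
      = T (a, b) (a2, b2) := by
  simp [Matrix.trace, Matrix.mul_apply, Matrix.single_apply, Matrix.kroneckerMap_apply,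
    Fintype.sum_prod_type, ite_and, Finset.sum_ite_eq]

theorem trace_pure_aux {m : Type*} [Fintype m] (ψ : m → ℂ) (M : Matrix m m ℂ) :
    (Matrix.vecMulVec ψ (star ψ) * M).trace = star ψ ⬝ᵥ (M *ᵥ ψ) := by
  rw [Matrix.trace_mul_comm, Matrix.mul_vecMulVec, Matrix.trace_vecMulVec, dotProduct_comm]

/-- For a pure state `ρ = |ψ⟩⟨ψ|`, all moments of `T_AB` agree with those of the
partial transpose (on the `H_A'` factor) of `T_ĀB`; consequently the two operators
have the same spectrum (here: the same nonzero eigenvalues, i.e. nonzero roots of the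
characteristic polynomial, with multiplicities). -/
theorem spacetime_density_matrix_pure_state_spectrum
    {A A' B B' : Type*} [Fintype A] [Fintype A'] [Fintype B] [Fintype B']
    [DecidableEq A] [DecidableEq A'] [DecidableEq B] [DecidableEq B']
    (ψ : A × A' → ℂ) (hψ : star ψ ⬝ᵥ ψ = 1)
    (ρ : Matrix (A × A') (A × A') ℂ) (hρ : ρ = Matrix.vecMulVec ψ (star ψ))
    (U : Matrix (B × B') (A × A') ℂ) (hU : Uᴴ * U = 1) (hU' : U * Uᴴ = 1)
    (T : Matrix (A × B) (A × B) ℂ)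
    (hT : ∀ (OA : Matrix A A ℂ) (OB : Matrix B B ℂ),
      (T * (OA ⊗ₖ OB)).trace
        = (ρ * (OA ⊗ₖ (1 : Matrix A' A' ℂ)) * Uᴴ
            * (OB ⊗ₖ (1 : Matrix B' B' ℂ)) * U).trace)
    (T' : Matrix (A' × B) (A' × B) ℂ)
    (hT' : ∀ (O : Matrix A' A' ℂ) (OB : Matrix B B ℂ),
      (T' * (O ⊗ₖ OB)).trace
        = (ρ * ((1 : Matrix A A ℂ) ⊗ₖ O) * Uᴴ
            * (OB ⊗ₖ (1 : Matrix B' B' ℂ)) * U).trace) :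
    (∀ n : ℕ, 1 ≤ n → (T ^ n).trace = ((ptranspL T') ^ n).trace) ∧
      (Matrix.charpoly T).roots.filter (fun z => z ≠ 0)
        = (Matrix.charpoly (ptranspL T')).roots.filter (fun z => z ≠ 0) := by
  subst hρ
  set φ := U *ᵥ ψ with hφ
  have hTe : ∀ a b a2 b2, T (a, b) (a2, b2)
      = ∑ a', ∑ b', star (ψ (a2, a')) * (star (U (b2, b') (a, a')) * φ (b, b')) := by
    intro a b a2 b2
    rw [← trace_mul_single_kron_aux T, hT]
    simp only [Matrix.mul_assoc]
    rw [trace_pure_aux]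
    simp only [← Matrix.mulVec_mulVec, ← hφ]
    simp [dotProduct, Matrix.mulVec, Matrix.single_apply, Matrix.kroneckerMap_apply,
      Fintype.sum_prod_type, ite_and, Matrix.one_apply, Finset.mul_sum]
  have hTe' : ∀ a' b a2' b2, T' (a', b) (a2', b2)
      = ∑ a, ∑ b', star (ψ (a, a2')) * (star (U (b2, b') (a, a')) * φ (b, b')) := by
    intro a b a2 b2
    rw [← trace_mul_single_kron_aux T', hT']
    simp only [Matrix.mul_assoc]
    rw [trace_pure_aux]
    simp only [← Matrix.mulVec_mulVec, ← hφ]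
    simp [dotProduct, Matrix.mulVec, Matrix.single_apply, Matrix.kroneckerMap_apply,
      Fintype.sum_prod_type, ite_and, Matrix.one_apply, Finset.mul_sum]
  let X : Matrix (A × B) (A' × B) ℂ :=
    Matrix.of fun x y => if x.2 = y.2 then star (ψ (x.1, y.1)) else 0
  let Y : Matrix (A' × B) (A × B) ℂ :=
    Matrix.of fun y x => ∑ b', star (U (y.2, b') (x.1, y.1)) * φ (x.2, b')
  have h1 : Tᵀ = X * Y := by
    ext ⟨a2, b2⟩ ⟨a, b⟩
    simp [X, Y, hTe, Matrix.mul_apply, Fintype.sum_prod_type, Finset.mul_sum]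
  have h2 : (ptranspL T')ᵀ = Y * X := by
    ext ⟨a', b2⟩ ⟨a2', b⟩
    simp [X, Y, ptranspL, hTe', Matrix.mul_apply, Fintype.sum_prod_type, Finset.mul_sum, mul_comm]
  constructor
  · intro n hn
    rw [← Matrix.trace_transpose (T ^ n), ← Matrix.trace_transpose (ptranspL T' ^ n),
      Matrix.transpose_pow, Matrix.transpose_pow, h1, h2]
    exact trace_mul_pow_comm_aux X Y n hn
  · rw [← Matrix.charpoly_transpose T, ← Matrix.charpoly_transpose (ptranspL T'), h1, h2]
    convert roots_filter_comm_aux X Y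
end

section
/- (Corollary on causal connection) If Im Tr(T_AB²) ≠ 0 or Re Tr(T_AB²) < 0, then there exist linear operators O_A on H_A and O_B on H_B with ⟨[O_A(0), O_B(t)]⟩ ≠ 0; that is, a nonzero imaginary part or a negative real part of Tr(T_AB²) implies that some time-separated commutator has nonvanishing expectation value. -/
open Matrix
open scoped Kronecker ComplexOrder ENNReal

/-- If `Im Tr(T_AB²) ≠ 0` or `Re Tr(T_AB²) < 0`, then some time-separated commutator
has a nonvanishing expectation value. -/
theorem causal_connection_of_trace_sq
    {A A' B B' : Type*} [Fintype A] [Fintype A'] [Fintype B] [Fintype B']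
    [DecidableEq A] [DecidableEq A'] [DecidableEq B] [DecidableEq B']
    (ρ : Matrix (A × A') (A × A') ℂ) (hρ : ρ.PosSemidef) (hρtr : ρ.trace = 1)
    (U : Matrix (B × B') (A × A') ℂ) (hU : Uᴴ * U = 1) (hU' : U * Uᴴ = 1)
    (T : Matrix (A × B) (A × B) ℂ)
    (hT : ∀ (OA : Matrix A A ℂ) (OB : Matrix B B ℂ),
      (T * (OA ⊗ₖ OB)).trace
        = (ρ * (OA ⊗ₖ (1 : Matrix A' A' ℂ)) * Uᴴ
            * (OB ⊗ₖ (1 : Matrix B' B' ℂ)) * U).trace) :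
    ((T ^ 2).trace.im ≠ 0 ∨ (T ^ 2).trace.re < 0) →
      ∃ (OA : Matrix A A ℂ) (OB : Matrix B B ℂ),
        (ρ * (OA ⊗ₖ (1 : Matrix A' A' ℂ)) * Uᴴ
            * (OB ⊗ₖ (1 : Matrix B' B' ℂ)) * U).trace
          - (ρ * Uᴴ * (OB ⊗ₖ (1 : Matrix B' B' ℂ)) * U
            * (OA ⊗ₖ (1 : Matrix A' A' ℂ))).trace ≠ 0 := by
  intro h
  by_contra hne
  push Not at hne
  have key : ∀ (OA : Matrix A A ℂ) (OB : Matrix B B ℂ),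
      (Tᴴ * (OA ⊗ₖ OB)).trace = (T * (OA ⊗ₖ OB)).trace := by
    intro OA OB
    have h1 : (Tᴴ * (OA ⊗ₖ OB)).trace = star (T * (OAᴴ ⊗ₖ OBᴴ)).trace := by
      rw [← Matrix.trace_conjTranspose, Matrix.conjTranspose_mul,
        Matrix.conjTranspose_kronecker, Matrix.conjTranspose_conjTranspose,
        Matrix.conjTranspose_conjTranspose, Matrix.trace_mul_comm]
    rw [h1, hT, hT, ← Matrix.trace_conjTranspose, sub_eq_zero.mp (hne OA OB)]
    simp only [Matrix.conjTranspose_mul, Matrix.conjTranspose_kronecker,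
      Matrix.conjTranspose_conjTranspose, Matrix.conjTranspose_one, hρ.isHermitian.eq]
    simp only [← Matrix.mul_assoc]
    rw [Matrix.trace_mul_comm]
    simp only [← Matrix.mul_assoc]
  have hH : Tᴴ = T := by
    ext ⟨a, b⟩ ⟨a', b'⟩
    have := key (Matrix.single a' a 1) (Matrix.single b' b 1)
    rw [Matrix.single_kronecker_single] at this
    simpa [Matrix.trace_mul_single] using this
  have hpos : 0 ≤ (T ^ 2).trace := by
    have := (Matrix.posSemidef_conjTranspose_mul_self T).trace_nonneg
    rwa [hH, ← pow_two] at this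
  rw [Complex.le_def] at hpos
  rcases h with h | h
  · exact h hpos.2.symm
  · exact absurd hpos.1 (not_le.mpr h)
end

section
/- (Lieb–Robinson-type bound for imagitivity) Suppose K ≥ 0 is a constant such that for all linear operators O_A on H_A and O_B on H_B, ||[(O_A ⊗ 1), U†(O_B ⊗ 1)U]||_2 ≤ K · ||O_A||_2 · ||O_B||_2. Then the 2-imagitivity obeys ||T_AB − T_AB†||_2 ≤ min(dim H_A, dim H_B) · ||ρ||_2 · K ≤ min(dim H_A, dim H_B) · K. -/
open Matrix
open scoped Kronecker ComplexOrder ENNReal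

/-- The Frobenius (Hilbert--Schmidt) norm of a matrix. -/
noncomputable def frob {m n : Type*} [Fintype m] [Fintype n] (M : Matrix m n ℂ) : ℝ :=
  Real.sqrt ((Mᴴ * M).trace.re)

lemma le_of_sq_le_sq_real {a b : ℝ} (h : a ^ 2 ≤ b ^ 2) (hb : 0 ≤ b) : a ≤ b :=
  (le_abs_self a).trans (abs_le_of_sq_le_sq h hb)

lemma frob_eq_sum {m n : Type*} [Fintype m] [Fintype n] (M : Matrix m n ℂ) :
    frob M = Real.sqrt (∑ i, ∑ j, ‖M i j‖ ^ 2) := by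
  unfold frob
  congr 1
  rw [Finset.sum_comm]
  simp only [Matrix.trace, Matrix.diag, Matrix.mul_apply, Complex.re_sum,
    Matrix.conjTranspose_apply]
  refine Finset.sum_congr rfl fun j _ => Finset.sum_congr rfl fun i _ => ?_
  rw [Complex.star_def, ← Complex.normSq_eq_conj_mul_self, Complex.ofReal_re,
    Complex.normSq_eq_norm_sq]

lemma frob_nonneg {m n : Type*} [Fintype m] [Fintype n] (M : Matrix m n ℂ) :
    0 ≤ frob M := Real.sqrt_nonneg _

lemma frob_sq {m n : Type*} [Fintype m] [Fintype n] (M : Matrix m n ℂ) :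
    frob M ^ 2 = ∑ i, ∑ j, ‖M i j‖ ^ 2 := by
  rw [frob_eq_sum, Real.sq_sqrt]
  positivity

lemma norm_trace_mul_le {m : Type*} [Fintype m] (P M : Matrix m m ℂ) :
    ‖(P * M).trace‖ ≤ frob P * frob M := by
  have h1 : ‖(P * M).trace‖ ≤ ∑ x : m × m, ‖P x.1 x.2‖ * ‖M x.2 x.1‖ := by
    rw [Fintype.sum_prod_type]
    simp only [Matrix.trace, Matrix.diag, Matrix.mul_apply]
    refine (norm_sum_le _ _).trans (Finset.sum_le_sum fun i _ => ?_)
    refine (norm_sum_le _ _).trans (Finset.sum_le_sum fun j _ => ?_)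
    rw [norm_mul]
  refine h1.trans ?_
  have h2 := Finset.sum_mul_sq_le_sq_mul_sq Finset.univ
    (fun x : m × m => ‖P x.1 x.2‖) (fun x : m × m => ‖M x.2 x.1‖)
  have h3 : ∑ x : m × m, ‖M x.2 x.1‖ ^ 2 = frob M ^ 2 := by
    rw [frob_sq, Fintype.sum_prod_type, Finset.sum_comm]
  have h4 : ∑ x : m × m, ‖P x.1 x.2‖ ^ 2 = frob P ^ 2 := by
    rw [frob_sq, Fintype.sum_prod_type]
  rw [h3, h4, ← mul_pow] at h2
  exact le_of_sq_le_sq_real h2 (mul_nonneg (frob_nonneg _) (frob_nonneg _))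

open scoped MatrixOrder Matrix.Norms.L2Operator in
lemma exists_factor {m : Type*} [Fintype m] [DecidableEq m] (P : Matrix m m ℂ)
    (hP : P.PosSemidef) : ∃ C : Matrix m m ℂ, P = Cᴴ * C :=
  CStarAlgebra.nonneg_iff_eq_star_mul_self.mp hP.nonneg

lemma frob_le_one {m : Type*} [Fintype m] [DecidableEq m] (P : Matrix m m ℂ)
    (hP : P.PosSemidef) (htr : P.trace = 1) : frob P ≤ 1 := by
  obtain ⟨C, rfl⟩ := exists_factor P hP
  have hC : frob C = 1 := by
    unfold frob
    rw [htr]; simp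
  have hC' : ∑ i, ∑ j, ‖C i j‖ ^ 2 = 1 := by rw [← frob_sq, hC]; norm_num
  have key : frob (Cᴴ * C) ^ 2 ≤ 1 := by
    rw [frob_sq]
    have hb : ∀ i j, ‖(Cᴴ * C) i j‖ ^ 2 ≤ (∑ k, ‖C k i‖ ^ 2) * (∑ k, ‖C k j‖ ^ 2) := by
      intro i j
      refine le_trans ?_ (Finset.sum_mul_sq_le_sq_mul_sq Finset.univ _ _)
      refine pow_le_pow_left₀ (norm_nonneg _) ?_ 2
      rw [Matrix.mul_apply]
      refine (norm_sum_le _ _).trans (Finset.sum_le_sum fun k _ => ?_)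
      simp
    refine (Finset.sum_le_sum fun i _ => Finset.sum_le_sum fun j _ => hb i j).trans ?_
    rw [← Finset.sum_mul_sum, Finset.sum_comm, hC']
    norm_num
  nlinarith [frob_nonneg (Cᴴ * C)]

lemma trace_mul_kron {A B : Type*} [Fintype A] [Fintype B]
    (X : Matrix (A × B) (A × B) ℂ) (P : Matrix A A ℂ) (Q : Matrix B B ℂ) :
    (X * (P ⊗ₖ Q)).trace
      = ∑ a, ∑ b, ∑ a', ∑ b', X (a, b) (a', b') * (P a' a * Q b' b) := by
  simp [Matrix.trace, Matrix.mul_apply, Fintype.sum_prod_type]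

lemma frob_le_card {A B : Type*} [Fintype A] [Fintype B] [DecidableEq A]
    (X : Matrix (A × B) (A × B) ℂ) (c : ℝ) (hc : 0 ≤ c)
    (h : ∀ (P : Matrix A A ℂ) (Q : Matrix B B ℂ),
      ‖(X * (P ⊗ₖ Q)).trace‖ ≤ c * frob P * frob Q) :
    frob X ≤ Fintype.card A * c := by
  have hblock : ∀ i j, ∑ b, ∑ b', ‖X (i, b) (j, b')‖ ^ 2 ≤ c ^ 2 := by
    intro i j
    set Q : Matrix B B ℂ := fun b' b => star (X (i, b) (j, b')) with hQ
    have hE : frob (Matrix.single j i (1 : ℂ)) = 1 := by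
      rw [frob_eq_sum, Finset.sum_eq_single j, Finset.sum_eq_single i]
      · simp
      · intro b _ hb; simp [Matrix.single_apply, hb.symm]
      · simp
      · intro b _ hb; simp [Matrix.single_apply, hb.symm]
      · simp
    have hS : frob Q ^ 2 = ∑ b, ∑ b', ‖X (i, b) (j, b')‖ ^ 2 := by
      rw [frob_sq, Finset.sum_comm]
      simp [hQ]
    have ht : (X * (Matrix.single j i (1 : ℂ) ⊗ₖ Q)).trace = ((frob Q ^ 2 : ℝ) : ℂ) := by
      rw [hS, trace_mul_kron, Finset.sum_eq_single i]
      · push_cast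
        refine Finset.sum_congr rfl fun b _ => ?_
        rw [Finset.sum_eq_single j]
        · refine Finset.sum_congr rfl fun b' _ => ?_
          simp [hQ, Complex.mul_conj']
        · intro a _ ha; simp [Matrix.single_apply, ha.symm]
        · simp
      · intro a _ ha; simp [Matrix.single_apply, ha.symm]
      · simp
    have h1 := h (Matrix.single j i 1) Q
    rw [ht, hE, Complex.norm_real, Real.norm_of_nonneg (sq_nonneg _)] at h1
    rw [← hS]
    have h0 := frob_nonneg Q
    nlinarith [sq_nonneg (frob Q - c)]
  have hsum : frob X ^ 2 ≤ (Fintype.card A * c) ^ 2 := by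
    have : frob X ^ 2 = ∑ i, ∑ j, ∑ b, ∑ b', ‖X (i, b) (j, b')‖ ^ 2 := by
      rw [frob_sq]
      simp only [Fintype.sum_prod_type]
      refine Finset.sum_congr rfl fun i _ => ?_
      rw [Finset.sum_comm]
    rw [this]
    refine (Finset.sum_le_sum fun i _ => Finset.sum_le_sum fun j _ => hblock i j).trans ?_
    simp only [Finset.sum_const, Finset.card_univ, nsmul_eq_mul]
    apply le_of_eq; ring
  exact le_of_sq_le_sq_real hsum (by positivity)

/-- Lieb--Robinson-type bound for the 2-imagitivity: if every commutator
`[(O_A ⊗ 1), U† (O_B ⊗ 1) U]` has Frobenius norm at most `K ‖O_A‖₂ ‖O_B‖₂`,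
then `‖T_AB − T_AB†‖₂ ≤ min(dim H_A, dim H_B) · ‖ρ‖₂ · K ≤ min(dim H_A, dim H_B) · K`. -/
theorem imagitivity_lieb_robinson_bound
    {A A' B B' : Type*} [Fintype A] [Fintype A'] [Fintype B] [Fintype B']
    [DecidableEq A] [DecidableEq A'] [DecidableEq B] [DecidableEq B']
    (ρ : Matrix (A × A') (A × A') ℂ) (hρ : ρ.PosSemidef) (hρtr : ρ.trace = 1)
    (U : Matrix (B × B') (A × A') ℂ) (hU : Uᴴ * U = 1) (hU' : U * Uᴴ = 1)
    (T : Matrix (A × B) (A × B) ℂ)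
    (hT : ∀ (OA : Matrix A A ℂ) (OB : Matrix B B ℂ),
      (T * (OA ⊗ₖ OB)).trace
        = (ρ * (OA ⊗ₖ (1 : Matrix A' A' ℂ)) * Uᴴ
            * (OB ⊗ₖ (1 : Matrix B' B' ℂ)) * U).trace)
    (K : ℝ) (hK : 0 ≤ K)
    (hLR : ∀ (OA : Matrix A A ℂ) (OB : Matrix B B ℂ),
      frob ((OA ⊗ₖ (1 : Matrix A' A' ℂ)) * (Uᴴ * (OB ⊗ₖ (1 : Matrix B' B' ℂ)) * U)
          - (Uᴴ * (OB ⊗ₖ (1 : Matrix B' B' ℂ)) * U) * (OA ⊗ₖ (1 : Matrix A' A' ℂ)))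
        ≤ K * frob OA * frob OB) :
    frob (T - Tᴴ) ≤ (min (Fintype.card A) (Fintype.card B) : ℝ) * frob ρ * K ∧
      (min (Fintype.card A) (Fintype.card B) : ℝ) * frob ρ * K
        ≤ (min (Fintype.card A) (Fintype.card B) : ℝ) * K := by
  have hρ1 : frob ρ ≤ 1 := frob_le_one ρ hρ hρtr
  have hρH : ρᴴ = ρ := hρ.isHermitian
  have hX : ∀ (OA : Matrix A A ℂ) (OB : Matrix B B ℂ),
      ‖((T - Tᴴ) * (OA ⊗ₖ OB)).trace‖ ≤ (frob ρ * K) * frob OA * frob OB := by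
    intro OA OB
    have e1 : (Tᴴ * (OA ⊗ₖ OB)).trace
        = (ρ * ((Uᴴ * (OB ⊗ₖ (1 : Matrix B' B' ℂ)) * U)
            * (OA ⊗ₖ (1 : Matrix A' A' ℂ)))).trace := by
      have h1 := congrArg star (hT OAᴴ OBᴴ)
      rw [← Matrix.trace_conjTranspose, ← Matrix.trace_conjTranspose] at h1
      simp only [Matrix.conjTranspose_mul, Matrix.conjTranspose_kronecker,
        Matrix.conjTranspose_conjTranspose, Matrix.conjTranspose_one, hρH] at h1
      rw [Matrix.trace_mul_comm, h1, Matrix.trace_mul_comm ρ]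
      simp only [Matrix.mul_assoc]
    have e2 : ((T - Tᴴ) * (OA ⊗ₖ OB)).trace
        = (ρ * ((OA ⊗ₖ (1 : Matrix A' A' ℂ)) * (Uᴴ * (OB ⊗ₖ (1 : Matrix B' B' ℂ)) * U)
          - (Uᴴ * (OB ⊗ₖ (1 : Matrix B' B' ℂ)) * U)
            * (OA ⊗ₖ (1 : Matrix A' A' ℂ)))).trace := by
      rw [Matrix.sub_mul, Matrix.trace_sub, e1, hT, Matrix.mul_sub, Matrix.trace_sub]
      simp only [Matrix.mul_assoc]
    rw [e2]
    refine (norm_trace_mul_le _ _).trans ?_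
    refine (mul_le_mul_of_nonneg_left (hLR OA OB) (frob_nonneg ρ)).trans (le_of_eq ?_)
    ring
  have hc : 0 ≤ frob ρ * K := mul_nonneg (frob_nonneg _) hK
  have hA := frob_le_card (T - Tᴴ) _ hc hX
  have hB : frob (T - Tᴴ) ≤ Fintype.card B * (frob ρ * K) := by
    have hswap : frob ((T - Tᴴ).submatrix (Prod.swap : B × A → A × B) Prod.swap)
        = frob (T - Tᴴ) := by
      rw [frob_eq_sum, frob_eq_sum]
      congr 1
      refine Fintype.sum_equiv (Equiv.prodComm B A) _ _ fun x => ?_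
      exact Fintype.sum_equiv (Equiv.prodComm B A) _ _ fun y => rfl
    rw [← hswap]
    refine frob_le_card _ _ hc fun P Q => ?_
    have e : ((T - Tᴴ).submatrix (Prod.swap : B × A → A × B) Prod.swap * (P ⊗ₖ Q)).trace
        = ((T - Tᴴ) * (Q ⊗ₖ P)).trace := by
      simp only [Matrix.trace, Matrix.diag, Matrix.mul_apply]
      refine Fintype.sum_equiv (Equiv.prodComm B A) _ _ fun x => ?_
      refine Fintype.sum_equiv (Equiv.prodComm B A) _ _ fun y => ?_
      simp [Matrix.kroneckerMap_apply, mul_comm]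
    rw [e]
    refine (hX Q P).trans (le_of_eq ?_)
    ring
  constructor
  · rw [mul_assoc]
    rcases min_choice (Fintype.card A : ℝ) (Fintype.card B : ℝ) with h | h <;> rw [h]
    · exact hA
    · exact hB
  · have hm : (0 : ℝ) ≤ min (Fintype.card A : ℝ) (Fintype.card B : ℝ) := by positivity
    rw [mul_assoc]
    refine mul_le_mul_of_nonneg_left ?_ hm
    nlinarith
end
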